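/- Let E be a normal ordered Polish space and P a monotone Markov kernel on E such that the set M = {(x,y) : x ⪯ y} is achievable, and assume there exists a stationary distribution π for P. Then for every y ∈ E the law of Xₙʸ converges weakly to π as n → ∞. -/

import Mathlib

open MeasureTheory ProbabilityTheory Filter Topology

/-- `μ` is *stochastically smaller* than `ν` (written `μ ⪯ ν` in the paper):
`μ I ≤ ν I` for every Borel increasing (upper) set `I`. -/
def StochDom {E : Type*} [MeasurableSpace E] [Preorder E] (μ ν : Measure E) : Prop :=
  ∀ I : Set E, MeasurableSet I → IsUpperSet I → μ I ≤ ν I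

/-- A Markov kernel `P` is *(stochastically) monotone* if for every bounded monotone
measurable `g : E → [0,1]` the map `x ↦ ∫ g dP(x)` is again monotone. -/
def MonotoneKernel {E : Type*} [MeasurableSpace E] [Preorder E] (P : Kernel E E) : Prop :=
  ∀ g : E → ℝ, Measurable g → Monotone g → (∀ x, g x ∈ Set.Icc (0 : ℝ) 1) →
    Monotone fun x => ∫ y, g y ∂(P x)

/-- The `n`-step transition kernel `P⁽ⁿ⁾` of a Markov kernel `P`;
`kpow P n x` is the law of `Xₙˣ`, the chain with kernel `P` started at `x`. -/
noncomputable def kpow {E : Type*} [MeasurableSpace E] (P : Kernel E E) : ℕ → Kernel E E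
  | 0 => Kernel.id
  | n + 1 => P.comp (kpow P n)

/-- The process `Z` on `(Ω, μ)` is a (possibly time-inhomogeneous) Markov chain with
one-step kernels `Q n`, expressed through finite-dimensional distributions: for every
bounded measurable cylinder functional `φ` of the past and every Borel set `A`,
`E[φ(Z₀,…,Zₙ) · 1_A(Z_{n+1})] = E[φ(Z₀,…,Zₙ) · (Q n)(Zₙ, A)]`. -/
def MCStep {Ω S : Type*} [MeasurableSpace Ω] [MeasurableSpace S]
    (μ : Measure Ω) (Q : ℕ → Kernel S S) (Z : ℕ → Ω → S) : Prop :=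
  ∀ (n : ℕ) (A : Set S), MeasurableSet A →
    ∀ φ : (Fin (n + 1) → S) → ℝ, Measurable φ → (∀ v, φ v ∈ Set.Icc (0 : ℝ) 1) →
      ∫ ω, φ (fun i => Z i.1 ω) * A.indicator (fun _ => (1 : ℝ)) (Z (n + 1) ω) ∂μ
        = ∫ ω, φ (fun i => Z i.1 ω) * ((Q n) (Z n ω) A).toReal ∂μ

/-- `X` on `(Ω, μ)` is a time-homogeneous Markov chain with kernel `P` started at `x`. -/
def IsMChain {E Ω : Type*} [MeasurableSpace E] [MeasurableSpace Ω]
    (P : Kernel E E) (x : E) (μ : Measure Ω) (X : ℕ → Ω → E) : Prop :=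
  IsProbabilityMeasure μ ∧ (∀ n, Measurable (X n)) ∧ (∀ᵐ ω ∂μ, X 0 ω = x) ∧
    MCStep μ (fun _ => P) X

/-- A *Markovian coupling* of two chains with kernel `P` started at `x` and `y`:
both coordinates are Markov chains with kernel `P` and the pair process is itself a
(possibly time-inhomogeneous) Markov chain. -/
def IsMarkovianCoupling {E Ω : Type*} [MeasurableSpace E] [MeasurableSpace Ω]
    (P : Kernel E E) (x y : E) (μ : Measure Ω) (X Y : ℕ → Ω → E) : Prop :=
  IsMChain P x μ X ∧ IsMChain P y μ Y ∧
    ∃ Q : ℕ → Kernel (E × E) (E × E), (∀ n, IsMarkovKernel (Q n)) ∧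
      MCStep μ Q fun n ω => (X n ω, Y n ω)

/-- A set `H ⊆ E × E` is *achievable* for the kernel `P` if for all `x, y` there is a
Markovian coupling of the chains started at `x` and `y` whose hitting time of `H`
is finite almost surely. -/
def Achievable {E : Type*} [MeasurableSpace E] (P : Kernel E E) (H : Set (E × E)) : Prop :=
  ∀ x y : E, ∃ (Ω : Type) (_ : MeasurableSpace Ω) (μ : Measure Ω) (X Y : ℕ → Ω → E),
    IsMarkovianCoupling P x y μ X Y ∧ ∀ᵐ ω ∂μ, ∃ n, (X n ω, Y n ω) ∈ H

/-- Condition (BMC): every increasing sequence bounded above by some element converges. -/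
def BMC (E : Type*) [Preorder E] [TopologicalSpace E] : Prop :=
  ∀ (x : ℕ → E) (y : E), Monotone x → (∀ n, x n ≤ y) → ∃ l, Tendsto x atTop (nhds l)

/-- The ordered metric space `E` is *normal*: there is a continuous `h : [0,∞) → [0,∞)`
with `h 0 = 0` such that `x ⪯ y ⪯ z` implies `d(x,y) ≤ h (d(x,z))`. -/
def NormalOrdered (E : Type*) [PseudoMetricSpace E] [Preorder E] : Prop :=
  ∃ h : ℝ → ℝ, ContinuousOn h (Set.Ici 0) ∧ h 0 = 0 ∧ (∀ t ≥ (0 : ℝ), 0 ≤ h t) ∧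
    ∀ x y z : E, x ≤ y → y ≤ z → dist x y ≤ h (dist x z)

/-- Condition (PR): there are `x₀ ⪯ y₀` such that the hitting times
`ν⁻ = min {n ≥ 1 : Xₙ^{x₀} ⪰ x₀}` and `ν⁺ = min {n ≥ 1 : Xₙ^{y₀} ⪯ y₀}`
have finite expectations. -/
def PRCond {E : Type*} [MeasurableSpace E] [Preorder E] (P : Kernel E E) : Prop :=
  ∃ x₀ y₀ : E, x₀ ≤ y₀ ∧
    (∃ (Ω : Type) (_ : MeasurableSpace Ω) (μ : Measure Ω) (X : ℕ → Ω → E),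
      IsMChain P x₀ μ X ∧ (∀ᵐ ω ∂μ, ∃ n, 1 ≤ n ∧ x₀ ≤ X n ω) ∧
      Integrable (fun ω => ((sInf {n : ℕ | 1 ≤ n ∧ x₀ ≤ X n ω} : ℕ) : ℝ)) μ) ∧
    (∃ (Ω : Type) (_ : MeasurableSpace Ω) (μ : Measure Ω) (X : ℕ → Ω → E),
      IsMChain P y₀ μ X ∧ (∀ᵐ ω ∂μ, ∃ n, 1 ≤ n ∧ X n ω ≤ y₀) ∧
      Integrable (fun ω => ((sInf {n : ℕ | 1 ≤ n ∧ X n ω ≤ y₀} : ℕ) : ℝ)) μ)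

/-!
Write `Tⁿ g` for the `n`-step averages of a monotone `g` with values in `[0, 1]`. By Jensen's
inequality and invariance, `∫ (Tⁿ g)² dπ` decreases in `n`, and its decrement over `k` steps is the
squared `L²(π ⊗ Pᵏ)`-distance between `Tⁿ g` at time `k` and `Tⁿ⁺ᵏ g` at time `0`. Hence along a
subsequence of times, and for `π`-almost every starting point `x`, the predictions `Tⁿ⁻ᵏ g (Xₖˣ)`
become indistinguishable from `Tⁿ g x` for every `k`. Couple `Xˣ` with `Xʸ` and let `k` be the first
time at which `Xₖˣ ≤ Xₖʸ`: monotonicity makes the martingale `Tⁿ⁻ᵏ g (Xₖʸ)` exceed `Tⁿ g x - δ` with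
probability close to one, and Doob's maximal inequality gives `Tⁿ g x ≤ Tⁿ g y + δ`. Exchanging the
roles of the points (with `1 - g` for `g`) and averaging over `x` with law `π` yields
`Tⁿ g y → ∫ g dπ`.

This settles the convergence on measurable upper sets, hence on finite unions of sets `I ∩ J` with
`I` upper and `J` lower. Normality makes the order-convex hulls of small balls small, so such unions
exhaust every open set, up to small `π`-mass, and the portmanteau theorem applies.
-/

section TransitionOperator

variable {E F : Type*} [MeasurableSpace E] [MeasurableSpace F] {g : F → ℝ}

/-- A measurable function with values in `[0, 1]`: a member of the class `G`, monotonicity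
apart. -/
structure IsUnitMeasurable {E : Type*} [MeasurableSpace E] (g : E → ℝ) : Prop where
  measurable : Measurable g
  mem_Icc : ∀ x, g x ∈ Set.Icc (0 : ℝ) 1

namespace IsUnitMeasurable

lemma memLp (hg : IsUnitMeasurable g) (p : ENNReal) (μ : Measure F) [IsFiniteMeasure μ] :
    MemLp g p μ :=
  memLp_of_bounded (.of_forall hg.mem_Icc) hg.measurable.aestronglyMeasurable p

lemma integrable (hg : IsUnitMeasurable g) (μ : Measure F) [IsFiniteMeasure μ] :
    Integrable g μ :=
  memLp_one_iff_integrable.1 (hg.memLp 1 μ)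

lemma integral_mem_Icc (hg : IsUnitMeasurable g) (μ : Measure F) [IsProbabilityMeasure μ] :
    ∫ x, g x ∂μ ∈ Set.Icc (0 : ℝ) 1 :=
  (convex_Icc 0 1).integral_mem isClosed_Icc (.of_forall hg.mem_Icc) (hg.integrable μ)

lemma one_sub (hg : IsUnitMeasurable g) : IsUnitMeasurable fun x ↦ 1 - g x where
  measurable := hg.measurable.const_sub 1
  mem_Icc x := ⟨sub_nonneg.2 (hg.mem_Icc x).2, sub_le_self 1 (hg.mem_Icc x).1⟩

lemma sq (hg : IsUnitMeasurable g) : IsUnitMeasurable fun x ↦ g x ^ 2 where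
  measurable := hg.measurable.pow_const 2
  mem_Icc x := ⟨sq_nonneg _, pow_le_one₀ (hg.mem_Icc x).1 (hg.mem_Icc x).2⟩

lemma comp (hg : IsUnitMeasurable g) {X : E → F}
    (hX : Measurable X) : IsUnitMeasurable fun ω ↦ g (X ω) where
  measurable := hg.measurable.comp hX
  mem_Icc ω := hg.mem_Icc (X ω)

end IsUnitMeasurable

/-- The transition operator `g ↦ κ g` of a kernel `κ`, acting on real functions by
`(κ g) x = ∫ g dκ(x)`. -/
noncomputable def transitionOp (κ : Kernel E F) (g : F → ℝ) (x : E) : ℝ :=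
  ∫ y, g y ∂κ x

lemma IsUnitMeasurable.transitionOp (hg : IsUnitMeasurable g) (κ : Kernel E F)
    [IsMarkovKernel κ] : IsUnitMeasurable (transitionOp κ g) where
  measurable := hg.measurable.stronglyMeasurable.integral_kernel.measurable
  mem_Icc x := hg.integral_mem_Icc (κ x)

lemma transitionOp_one_sub (hg : IsUnitMeasurable g) (κ : Kernel E F) [IsMarkovKernel κ] (x : E) :
    transitionOp κ (fun y ↦ 1 - g y) x = 1 - transitionOp κ g x := by
  simp [transitionOp, integral_sub (integrable_const 1) (hg.integrable (κ x))]

lemma integral_bind_eq_integral_transitionOp (hg : IsUnitMeasurable g) (κ : Kernel E F)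
    [IsMarkovKernel κ] (μ : Measure E) [IsFiniteMeasure μ] :
    ∫ y, g y ∂μ.bind κ = ∫ x, transitionOp κ g x ∂μ := by
  rw [Measure.comp_eq_comp_const_apply, Kernel.integral_comp (hg.integrable _),
    Kernel.const_apply]
  rfl

lemma transitionOp_indicator_one (κ : Kernel E F) {A : Set F} (hA : MeasurableSet A) (x : E) :
    transitionOp κ (A.indicator 1) x = (κ x).real A :=
  integral_indicator_one hA

lemma isUnitMeasurable_indicator_one {A : Set F} (hA : MeasurableSet A) :
    IsUnitMeasurable (A.indicator (1 : F → ℝ)) where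
  measurable := measurable_one.indicator hA
  mem_Icc x := ⟨Set.indicator_nonneg (fun _ _ ↦ zero_le_one) x,
    Set.indicator_le_self' (fun _ _ ↦ zero_le_one) x⟩

end TransitionOperator

section Power

variable {E : Type*} [MeasurableSpace E] {P : Kernel E E} {g : E → ℝ}

lemma kpow_eq_pow (P : Kernel E E) (n : ℕ) : kpow P n = P ^ n := by
  induction n with
  | zero => rfl
  | succ n ih => rw [kpow, ih, pow_succ']; rfl

instance isMarkovKernel_pow (P : Kernel E E) [IsMarkovKernel P] (n : ℕ) :
    IsMarkovKernel (P ^ n) := by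
  induction n with
  | zero => exact inferInstanceAs (IsMarkovKernel (Kernel.id : Kernel E E))
  | succ n ih => exact inferInstanceAs (IsMarkovKernel ((P ^ n) ∘ₖ P))

lemma invariant_pow {π : Measure E} (hπ : P.Invariant π) (n : ℕ) : (P ^ n).Invariant π := by
  induction n with
  | zero => exact Measure.id_comp
  | succ n ih => exact ih.comp hπ

lemma transitionOp_pow_zero (hg : IsUnitMeasurable g) : transitionOp (P ^ 0) g = g :=
  funext fun x ↦ integral_dirac' g x hg.measurable.stronglyMeasurable

lemma transitionOp_pow_add [IsMarkovKernel P] (hg : IsUnitMeasurable g) (m n : ℕ) :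
    transitionOp (P ^ (m + n)) g = transitionOp (P ^ m) (transitionOp (P ^ n) g) := by
  funext x
  rw [add_comm, Kernel.pow_add]
  exact Kernel.integral_comp (hg.integrable _)

lemma integral_transitionOp_pow [IsMarkovKernel P] {π : Measure E} [IsFiniteMeasure π]
    (hπ : P.Invariant π) (hg : IsUnitMeasurable g) (n : ℕ) :
    ∫ x, transitionOp (P ^ n) g x ∂π = ∫ x, g x ∂π := by
  rw [← integral_bind_eq_integral_transitionOp hg, (invariant_pow hπ n).def]

lemma MonotoneKernel.monotone_transitionOp_pow [Preorder E] [IsMarkovKernel P]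
    (hP : MonotoneKernel P) (hg : IsUnitMeasurable g) (hgm : Monotone g) (n : ℕ) :
    Monotone (transitionOp (P ^ n) g) := by
  induction n with
  | zero => rwa [transitionOp_pow_zero hg]
  | succ n ih =>
    rw [add_comm, transitionOp_pow_add hg, pow_one]
    have hn := hg.transitionOp (P ^ n)
    exact hP _ hn.measurable ih hn.mem_Icc

end Power

section ConditionalVariance

variable {E F : Type*} [MeasurableSpace E] [MeasurableSpace F] {g : F → ℝ}

lemma transitionOp_variance (hg : IsUnitMeasurable g) (κ : Kernel E F) [IsMarkovKernel κ] (x : E) :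
    ∫ y, (g y - transitionOp κ g x) ^ 2 ∂κ x
      = transitionOp κ (fun y ↦ g y ^ 2) x - transitionOp κ g x ^ 2 := by
  have h := variance_eq_sub (hg.memLp 2 (κ x))
  rwa [variance_eq_integral hg.measurable.aemeasurable] at h

lemma integral_sq_sub_transitionOp (hg : IsUnitMeasurable g) (κ : Kernel E F) [IsMarkovKernel κ]
    (μ : Measure E) [IsFiniteMeasure μ] :
    ∫ p, (g p.2 - transitionOp κ g p.1) ^ 2 ∂(μ ⊗ₘ κ)
      = ∫ y, g y ^ 2 ∂μ.bind κ - ∫ x, transitionOp κ g x ^ 2 ∂μ := by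
  have hκg := hg.transitionOp κ
  have hint : Integrable (fun p : E × F ↦ (g p.2 - transitionOp κ g p.1) ^ 2) (μ ⊗ₘ κ) :=
    (((hg.comp measurable_snd).memLp 2 _).sub ((hκg.comp measurable_fst).memLp 2 _)).integrable_sq
  rw [Measure.integral_compProd hint, integral_bind_eq_integral_transitionOp hg.sq,
    ← integral_sub ((hg.sq.transitionOp κ).integrable μ) (hκg.sq.integrable μ)]
  exact integral_congr_ae (.of_forall (transitionOp_variance hg κ))

end ConditionalVariance

section StableSequences

lemma tendstoInMeasure_zero_of_tendsto_integral_sq {Ω ι : Type*} [MeasurableSpace Ω]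
    {μ : Measure Ω} {l : Filter ι} {f : ι → Ω → ℝ} (hf : ∀ i, MemLp (f i) 2 μ)
    (h : Tendsto (fun i ↦ ∫ ω, f i ω ^ 2 ∂μ) l (𝓝 0)) : TendstoInMeasure μ f l 0 := by
  refine tendstoInMeasure_of_tendsto_eLpNorm two_ne_zero
    (fun i ↦ (hf i).aestronglyMeasurable) aestronglyMeasurable_zero ?_
  simp only [sub_zero,
    fun i ↦ (hf i).eLpNorm_eq_integral_rpow_norm two_ne_zero ENNReal.ofNat_ne_top]
  have h' := ENNReal.tendsto_ofReal ((Real.continuous_sqrt.tendsto 0).comp h)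
  simpa [Function.comp_def, Real.sqrt_eq_rpow] using h'

lemma exists_strictMono_forall_ae_tendsto {Ω X : Type*} [MeasurableSpace Ω] [PseudoEMetricSpace X]
    {μ : ℕ → Measure Ω} {F : ℕ → ℕ → Ω → X} {G : ℕ → Ω → X}
    (h : ∀ k, TendstoInMeasure (μ k) (F k) atTop (G k)) :
    ∃ φ : ℕ → ℕ, StrictMono φ ∧
      ∀ k, ∀ᵐ ω ∂μ k, Tendsto (fun j ↦ F k (φ j) ω) atTop (𝓝 (G k ω)) := by
  let ε : ℕ → ENNReal := fun j ↦ 2⁻¹ ^ j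
  have hε_pos : ∀ j, 0 < ε j := fun j ↦ ENNReal.pow_pos (by simp) j
  have hε_sum : ∑' j, ε j ≠ ⊤ := by simp [ε, ENNReal.tsum_geometric]
  have hε_lim : Tendsto ε atTop (𝓝 0) := ENNReal.tendsto_pow_atTop_nhds_zero_of_lt_one (by simp)
  obtain ⟨φ, hφ, hφ_le⟩ : ∃ φ : ℕ → ℕ, StrictMono φ ∧
      ∀ j, ∀ k ≤ j, μ k {ω | ε j ≤ edist (F k (φ j) ω) (G k ω)} ≤ ε j :=
    extraction_forall_of_eventually fun j ↦ (Set.finite_Iic j).eventually_all.2 fun k _ ↦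
      ((h k (ε j) (hε_pos j)).eventually_le_const (hε_pos j))
  refine ⟨φ, hφ, fun k ↦ ?_⟩
  have hsum : ∑' j, μ k {ω | ε (j + k) ≤ edist (F k (φ (j + k)) ω) (G k ω)} ≠ ⊤ :=
    ne_top_of_le_ne_top (ENNReal.tsum_comp_le_tsum_of_injective (add_left_injective k) ε
      |>.trans_lt hε_sum.lt_top).ne (ENNReal.tsum_le_tsum fun j ↦ hφ_le _ k (Nat.le_add_left k j))
  filter_upwards [ae_eventually_notMem hsum] with ω hω
  rw [← tendsto_add_atTop_iff_nat k, tendsto_iff_edist_tendsto_0]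
  exact tendsto_of_tendsto_of_tendsto_of_le_of_le' tendsto_const_nhds
    ((tendsto_add_atTop_iff_nat k).2 hε_lim) (.of_forall fun _ ↦ zero_le)
    (hω.mono fun j hj ↦ (not_le.1 hj).le)

variable {E : Type*} [MeasurableSpace E] {P : Kernel E E} [IsMarkovKernel P] {g : E → ℝ}
  {π : Measure E}

lemma integral_sq_transitionOp_pow_sub [IsFiniteMeasure π] (hπ : P.Invariant π)
    (hg : IsUnitMeasurable g) (n k : ℕ) :
    ∫ p, (transitionOp (P ^ n) g p.2 - transitionOp (P ^ (n + k)) g p.1) ^ 2 ∂(π ⊗ₘ (P ^ k))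
      = ∫ x, transitionOp (P ^ n) g x ^ 2 ∂π - ∫ x, transitionOp (P ^ (n + k)) g x ^ 2 ∂π := by
  rw [add_comm n k, transitionOp_pow_add hg,
    integral_sq_sub_transitionOp (hg.transitionOp (P ^ n)), (invariant_pow hπ k).def]

lemma exists_tendsto_integral_transitionOp_pow_sq [IsFiniteMeasure π] (hπ : P.Invariant π)
    (hg : IsUnitMeasurable g) :
    ∃ L, Tendsto (fun n ↦ ∫ x, transitionOp (P ^ n) g x ^ 2 ∂π) atTop (𝓝 L) := by
  refine ⟨_, tendsto_atTop_ciInf (antitone_nat_of_succ_le fun n ↦ ?_) ⟨0, ?_⟩⟩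
  · rw [← sub_nonneg, ← integral_sq_transitionOp_pow_sub hπ hg n 1]
    exact integral_nonneg fun _ ↦ sq_nonneg _
  · rintro _ ⟨n, rfl⟩
    exact integral_nonneg fun _ ↦ sq_nonneg _

lemma tendstoInMeasure_transitionOp_pow_sub [IsFiniteMeasure π] (hπ : P.Invariant π)
    (hg : IsUnitMeasurable g) (k : ℕ) :
    TendstoInMeasure (π ⊗ₘ (P ^ k))
      (fun n p ↦ transitionOp (P ^ (n - k)) g p.2 - transitionOp (P ^ n) g p.1) atTop 0 := by
  have hmem (n : ℕ) : MemLp (fun p : E × E ↦ transitionOp (P ^ n) g p.2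
      - transitionOp (P ^ (n + k)) g p.1) 2 (π ⊗ₘ (P ^ k)) :=
    (((hg.transitionOp (P ^ n)).comp measurable_snd).memLp 2 _).sub
      (((hg.transitionOp (P ^ (n + k))).comp measurable_fst).memLp 2 _)
  obtain ⟨L, hL⟩ := exists_tendsto_integral_transitionOp_pow_sq hπ hg
  have hlim := hL.sub (hL.comp (tendsto_add_atTop_nat k))
  rw [sub_self] at hlim
  have h := tendstoInMeasure_zero_of_tendsto_integral_sq hmem
    (hlim.congr fun n ↦ (integral_sq_transitionOp_pow_sub hπ hg n k).symm)
  intro ε hε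
  rw [← tendsto_add_atTop_iff_nat k]
  simpa only [Nat.add_sub_cancel] using h ε hε

/-- `x` is *stable along* the sequence of times `m` if, for every lag `k`, the averages of `g` at
time `m j` predicted from `x` and from the state `z` reached after `k` steps agree in the limit
for almost every `z`. The subtraction `m j - k` only matters for large `j`. -/
def IsStableAlong {E : Type*} [MeasurableSpace E] (P : Kernel E E) (g : E → ℝ) (m : ℕ → ℕ)
    (x : E) : Prop :=
  ∀ k, ∀ᵐ z ∂(P ^ k) x, Tendsto
    (fun j ↦ transitionOp (P ^ (m j - k)) g z - transitionOp (P ^ m j) g x) atTop (𝓝 0)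

lemma exists_strictMono_ae_isStableAlong [IsFiniteMeasure π] (hπ : P.Invariant π)
    (hg : IsUnitMeasurable g) {m : ℕ → ℕ} (hm : Tendsto m atTop atTop) :
    ∃ φ : ℕ → ℕ, StrictMono φ ∧ ∀ᵐ x ∂π, IsStableAlong P g (m ∘ φ) x := by
  obtain ⟨φ, hφ, h⟩ := exists_strictMono_forall_ae_tendsto fun k ↦
    (tendstoInMeasure_transitionOp_pow_sub hπ hg k).comp hm
  exact ⟨φ, hφ, ae_all_iff.2 fun k ↦ Measure.ae_ae_of_ae_compProd (h k)⟩

lemma IsStableAlong.one_sub {m : ℕ → ℕ} {x : E} (hx : IsStableAlong P g m x)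
    (hg : IsUnitMeasurable g) : IsStableAlong P (fun y ↦ 1 - g y) m x := fun k ↦ by
  filter_upwards [hx k] with z hz
  simpa [transitionOp_one_sub hg] using hz.neg

end StableSequences

section MarkovChain

variable {Ω S E : Type*} [MeasurableSpace Ω] [MeasurableSpace S] [MeasurableSpace E]
  {μ : Measure Ω}

/-- The σ-algebras generated by the pasts `(Z 0, …, Z n)` of a process. In contrast to
`Filtration.natural`, no topology on the state space is involved. -/
def pastFiltration (Z : ℕ → Ω → S) (hZ : ∀ n, Measurable (Z n)) :
    Filtration ℕ (inferInstance : MeasurableSpace Ω) where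
  seq n := .comap (fun ω (i : Fin (n + 1)) ↦ Z i ω) inferInstance
  mono' m n hmn := by
    have hproj : Measurable fun (v : Fin (n + 1) → S) (i : Fin (m + 1)) ↦
        v (i.castLE (Nat.add_le_add_right hmn 1)) := by fun_prop
    exact (hproj.comp (comap_measurable fun ω (i : Fin (n + 1)) ↦ Z i ω)).comap_le
  le' n := Measurable.comap_le (measurable_pi_lambda _ fun i ↦ hZ i)

lemma measurable_pastFiltration {Z : ℕ → Ω → S} (hZ : ∀ n, Measurable (Z n)) {k n : ℕ}
    (hkn : k ≤ n) : Measurable[pastFiltration Z hZ n] (Z k) :=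
  (measurable_pi_apply (⟨k, Nat.lt_succ_of_le hkn⟩ : Fin (n + 1))).comp
    (comap_measurable fun ω (i : Fin (n + 1)) ↦ Z i ω)

lemma MCStep.map_restrict_succ [IsFiniteMeasure μ] {Q : ℕ → Kernel S S} [∀ n, IsMarkovKernel (Q n)]
    {Z : ℕ → Ω → S} (h : MCStep μ Q Z) (hZ : ∀ n, Measurable (Z n)) {n : ℕ} {s : Set Ω}
    (hs : MeasurableSet[pastFiltration Z hZ n] s) :
    (μ.restrict s).map (Z (n + 1)) = ((μ.restrict s).map (Z n)).bind (Q n) := by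
  obtain ⟨t, ht, rfl⟩ := hs
  set s := (fun ω (i : Fin (n + 1)) ↦ Z i ω) ⁻¹' t
  have hs : MeasurableSet s := measurable_pi_lambda _ (fun i ↦ hZ _) ht
  have hmul (f : Ω → ℝ) : ∫ ω, t.indicator 1 (fun i : Fin (n + 1) ↦ Z i ω) * f ω ∂μ
      = ∫ ω in s, f ω ∂μ := by
    rw [← integral_indicator hs]
    congr with ω
    by_cases hω : ω ∈ s <;> simp_all [s]
  ext A hA
  have hA' := isUnitMeasurable_indicator_one hA
  have key := h n A hA (t.indicator 1) (isUnitMeasurable_indicator_one ht).measurable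
    (isUnitMeasurable_indicator_one ht).mem_Icc
  rw [hmul, hmul] at key
  rw [← measureReal_eq_measureReal_iff, ← integral_indicator_one hA, ← integral_indicator_one hA,
    integral_bind_eq_integral_transitionOp hA', integral_map (hZ _).aemeasurable
      hA'.measurable.aestronglyMeasurable, integral_map (hZ _).aemeasurable
      (hA'.transitionOp _).measurable.aestronglyMeasurable]
  simp only [transitionOp_indicator_one _ hA]
  exact key

lemma MCStep.setIntegral_succ [IsFiniteMeasure μ] {Q : ℕ → Kernel S S} [∀ n, IsMarkovKernel (Q n)]
    {Z : ℕ → Ω → S} (h : MCStep μ Q Z) (hZ : ∀ n, Measurable (Z n)) {g : S → ℝ}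
    (hg : IsUnitMeasurable g) {n : ℕ} {s : Set Ω}
    (hs : MeasurableSet[pastFiltration Z hZ n] s) :
    ∫ ω in s, g (Z (n + 1) ω) ∂μ = ∫ ω in s, transitionOp (Q n) g (Z n ω) ∂μ := by
  rw [← integral_map (hZ _).aemeasurable hg.measurable.aestronglyMeasurable,
    h.map_restrict_succ hZ hs, integral_bind_eq_integral_transitionOp hg,
    integral_map (hZ _).aemeasurable (hg.transitionOp _).measurable.aestronglyMeasurable]

variable {P : Kernel E E} [IsMarkovKernel P] {x : E} {X : ℕ → Ω → E} {g : E → ℝ}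

lemma IsMChain.map_eq (h : IsMChain P x μ X) (n : ℕ) : μ.map (X n) = (P ^ n) x := by
  obtain ⟨hμ, hX, hX₀, hstep⟩ := h
  induction n with
  | zero =>
    rw [Measure.map_congr hX₀, Measure.map_const, measure_univ, one_smul]
    rfl
  | succ n ih =>
    have h := hstep.map_restrict_succ hX (n := n) MeasurableSet.univ
    rw [Measure.restrict_univ, ih] at h
    rw [h, pow_succ']
    rfl

lemma IsMChain.martingale_transitionOp (h : IsMChain P x μ X) (hg : IsUnitMeasurable g) (n : ℕ) :
    Martingale (fun k ω ↦ transitionOp (P ^ (n - k)) g (X (min k n) ω))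
      (pastFiltration X h.2.1) μ := by
  obtain ⟨hμ, hX, -, hstep⟩ := h
  have hT (k : ℕ) := hg.transitionOp (P ^ (n - k))
  refine martingale_of_setIntegral_eq_succ (fun k ↦ ?_) (fun k ↦ ((hT k).comp (hX _)).integrable μ)
    fun k s hs ↦ ?_
  · exact ((hT k).measurable.comp
      (measurable_pastFiltration hX (min_le_left k n))).stronglyMeasurable
  · obtain hk | hk := lt_or_ge k n
    · rw [min_eq_left hk.le, min_eq_left (show k + 1 ≤ n from hk),
        show n - k = 1 + (n - (k + 1)) by omega, transitionOp_pow_add hg, pow_one]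
      exact (hstep.setIntegral_succ hX (hT (k + 1)) hs).symm
    · have hk' : n ≤ k + 1 := Nat.le_succ_of_le hk
      simp only [min_eq_right hk, min_eq_right hk', Nat.sub_eq_zero_of_le hk,
        Nat.sub_eq_zero_of_le hk']

lemma mul_measureReal_exists_le_of_submartingale [IsFiniteMeasure μ]
    {𝓕 : Filtration ℕ (inferInstance : MeasurableSpace Ω)} {f : ℕ → Ω → ℝ}
    (hf : Submartingale f 𝓕 μ) (hf₀ : 0 ≤ f) (n : ℕ) (a : ℝ) :
    a * μ.real {ω | ∃ k ≤ n, a ≤ f k ω} ≤ ∫ ω, f n ω ∂μ := by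
  obtain ha | ha := le_total a 0
  · exact (mul_nonpos_of_nonpos_of_nonneg ha measureReal_nonneg).trans (integral_nonneg (hf₀ n))
  lift a to NNReal using ha
  have hB : {ω | ∃ k ≤ n, (a : ℝ) ≤ f k ω} = {ω | (a : ℝ) ≤
      (Finset.range (n + 1)).sup' Finset.nonempty_range_add_one fun k ↦ f k ω} := by
    ext ω
    simp [Finset.le_sup'_iff]
  rw [hB]
  have hdoob := ENNReal.toReal_mono ENNReal.ofReal_ne_top (maximal_ineq hf hf₀ (ε := a) n)
  rw [ENNReal.toReal_mul, ENNReal.toReal_ofReal (integral_nonneg (hf₀ n))] at hdoob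
  exact hdoob.trans (setIntegral_le_integral (hf.integrable n) (.of_forall (hf₀ n)))

lemma IsMChain.mul_measureReal_exists_le (h : IsMChain P x μ X) (hg : IsUnitMeasurable g) (n : ℕ)
    (a : ℝ) : a * μ.real {ω | ∃ k ≤ n, a ≤ transitionOp (P ^ (n - k)) g (X k ω)}
      ≤ transitionOp (P ^ n) g x := by
  have hμ := h.1
  have hM := h.martingale_transitionOp hg n
  have hset : {ω | ∃ k ≤ n, a ≤ transitionOp (P ^ (n - k)) g (X k ω)}
      = {ω | ∃ k ≤ n, a ≤ transitionOp (P ^ (n - k)) g (X (min k n) ω)} := by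
    ext ω
    exact exists_congr fun k ↦ and_congr_right fun hk ↦ by rw [min_eq_left hk]
  rw [hset]
  calc a * μ.real {ω | ∃ k ≤ n, a ≤ transitionOp (P ^ (n - k)) g (X (min k n) ω)}
    _ ≤ ∫ ω, transitionOp (P ^ (n - n)) g (X (min n n) ω) ∂μ :=
      mul_measureReal_exists_le_of_submartingale hM.submartingale
        (fun k ω ↦ ((hg.transitionOp _).mem_Icc _).1) n a
    _ = ∫ ω, transitionOp (P ^ n) g (X 0 ω) ∂μ := by
      simpa using (hM.setIntegral_eq (Nat.zero_le n) MeasurableSet.univ).symm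
    _ = ∫ _, transitionOp (P ^ n) g x ∂μ :=
      integral_congr_ae (h.2.2.1.mono fun ω hω ↦ by simp only [hω])
    _ = transitionOp (P ^ n) g x := by simp

end MarkovChain

section Coupling

lemma tendsto_measureReal_one_of_ae_eventually_mem {Ω ι : Type*} [MeasurableSpace Ω]
    {μ : Measure Ω} [IsProbabilityMeasure μ] {l : Filter ι} [l.IsCountablyGenerated]
    {B : ι → Set Ω} (hB : ∀ i, MeasurableSet (B i)) (h : ∀ᵐ ω ∂μ, ∀ᶠ i in l, ω ∈ B i) :
    Tendsto (fun i ↦ μ.real (B i)) l (𝓝 1) := by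
  have h' := tendsto_measure_of_ae_tendsto_indicator_of_isFiniteMeasure (μ := μ) l
    MeasurableSet.univ hB (h.mono fun ω hω ↦ hω.mono fun i hi ↦ by simpa using hi)
  rw [measure_univ] at h'
  exact (ENNReal.tendsto_toReal ENNReal.one_ne_top).comp h'

/-- A variant of `Achievable` in which any coupling of the two chains is allowed: the pair process
need not be a Markov chain. -/
def CouplingAchievable {E : Type*} [MeasurableSpace E] (P : Kernel E E) (H : Set (E × E)) : Prop :=
  ∀ x y : E, ∃ (Ω : Type) (_ : MeasurableSpace Ω) (μ : Measure Ω) (X Y : ℕ → Ω → E),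
    IsMChain P x μ X ∧ IsMChain P y μ Y ∧ ∀ᵐ ω ∂μ, ∃ n, (X n ω, Y n ω) ∈ H

lemma Achievable.couplingAchievable {E : Type*} [MeasurableSpace E] {P : Kernel E E}
    {H : Set (E × E)} (h : Achievable P H) : CouplingAchievable P H := fun x y ↦
  let ⟨Ω, mΩ, μ, X, Y, hXY, hH⟩ := h x y
  ⟨Ω, mΩ, μ, X, Y, hXY.1, hXY.2.1, hH⟩

variable {E Ω : Type*} [MeasurableSpace E] [MeasurableSpace Ω] {P : Kernel E E}
  [IsMarkovKernel P] {μ : Measure Ω} {x y : E} {X Y : ℕ → Ω → E} {g : E → ℝ} {m : ℕ → ℕ}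

lemma IsStableAlong.ae_tendsto (hx : IsStableAlong P g m x) (hX : IsMChain P x μ X) :
    ∀ᵐ ω ∂μ, ∀ k, Tendsto (fun j ↦ transitionOp (P ^ (m j - k)) g (X k ω)
      - transitionOp (P ^ m j) g x) atTop (𝓝 0) := by
  refine ae_all_iff.2 fun k ↦ ?_
  have hk := hx k
  rw [← hX.map_eq] at hk
  exact ae_of_ae_map (hX.2.1 k).aemeasurable hk

lemma IsStableAlong.eventually_transitionOp_lt_add (hx : IsStableAlong P g m x)
    (hg : IsUnitMeasurable g) (hm : Tendsto m atTop atTop) (hX : IsMChain P x μ X)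
    (hY : IsMChain P y μ Y) (hXY : ∀ᵐ ω ∂μ, ∃ k, ∀ n,
      transitionOp (P ^ n) g (X k ω) ≤ transitionOp (P ^ n) g (Y k ω)) {δ : ℝ} (hδ : 0 < δ) :
    ∀ᶠ j in atTop, transitionOp (P ^ m j) g x < transitionOp (P ^ m j) g y + δ := by
  have hμ := hX.1
  have hT (n : ℕ) := hg.transitionOp (P ^ n)
  let a (j : ℕ) : ℝ := transitionOp (P ^ m j) g x - δ / 2
  let B (j : ℕ) : Set Ω := {ω | ∃ k ≤ m j, a j ≤ transitionOp (P ^ (m j - k)) g (Y k ω)}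
  have hBmeas (j : ℕ) : MeasurableSet (B j) := by
    have : B j = ⋃ k ≤ m j, {ω | a j ≤ transitionOp (P ^ (m j - k)) g (Y k ω)} := by
      ext; simp [B]
    rw [this]
    exact .biUnion (Set.to_countable _) fun k _ ↦
      measurableSet_le measurable_const ((hT _).measurable.comp (hY.2.1 k))
  have hBmem : ∀ᵐ ω ∂μ, ∀ᶠ j in atTop, ω ∈ B j := by
    filter_upwards [hXY, hx.ae_tendsto hX] with ω ⟨k, hk⟩ hω
    filter_upwards [hm.eventually_ge_atTop k,
      (hω k).eventually_const_lt (neg_lt_zero.2 (half_pos hδ))] with j hkj hj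
    exact ⟨k, hkj, le_trans (by simp only [a]; linarith) (hk _)⟩
  filter_upwards [(tendsto_measureReal_one_of_ae_eventually_mem hBmeas hBmem).eventually_const_lt
    (sub_lt_self 1 (half_pos hδ))] with j hj
  have hmax : a j * μ.real (B j) ≤ transitionOp (P ^ m j) g y :=
    hY.mul_measureReal_exists_le hg (m j) (a j)
  have ha : a j ≤ 1 := (sub_le_self _ (half_pos hδ).le).trans ((hT _).mem_Icc x).2
  have hB : μ.real (B j) ≤ 1 := measureReal_le_one
  have hsplit : a j ≤ a j * μ.real (B j) + (1 - μ.real (B j)) := by nlinarith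
  simp only [a] at hsplit hmax
  linarith

variable [Preorder E]

lemma IsStableAlong.tendsto_transitionOp_sub (hx : IsStableAlong P g m x)
    (hg : IsUnitMeasurable g) (hgm : Monotone g) (hm : Tendsto m atTop atTop)
    (hP : MonotoneKernel P) (hach : CouplingAchievable P {p | p.1 ≤ p.2}) (y : E) :
    Tendsto (fun j ↦ transitionOp (P ^ m j) g x - transitionOp (P ^ m j) g y) atTop (𝓝 0) := by
  have hmono (n : ℕ) := hP.monotone_transitionOp_pow hg hgm n
  have hupper {δ : ℝ} (hδ : 0 < δ) :
      ∀ᶠ j in atTop, transitionOp (P ^ m j) g x < transitionOp (P ^ m j) g y + δ := by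
    obtain ⟨Ω, _, μ, X, Y, hX, hY, hXY⟩ := hach x y
    exact hx.eventually_transitionOp_lt_add hg hm hX hY
      (hXY.mono fun ω ⟨k, hk⟩ ↦ ⟨k, fun n ↦ hmono n hk⟩) hδ
  have hlower {δ : ℝ} (hδ : 0 < δ) :
      ∀ᶠ j in atTop, transitionOp (P ^ m j) g y < transitionOp (P ^ m j) g x + δ := by
    obtain ⟨Ω, _, μ, Y, X, hY, hX, hYX⟩ := hach y x
    have h := (hx.one_sub hg).eventually_transitionOp_lt_add hg.one_sub hm hX hY
      (hYX.mono fun ω ⟨k, hk⟩ ↦ ⟨k, fun n ↦ by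
        simpa only [transitionOp_one_sub hg] using sub_le_sub_left (hmono n hk) 1⟩) hδ
    filter_upwards [h] with j hj
    simp only [transitionOp_one_sub hg] at hj
    linarith
  refine Metric.tendsto_nhds.2 fun δ hδ ↦ ?_
  filter_upwards [hupper hδ, hlower hδ] with j h₁ h₂
  rw [Real.dist_0_eq_abs, abs_sub_lt_iff]
  constructor <;> linarith

theorem tendsto_transitionOp_pow {π : Measure E} [IsProbabilityMeasure π] (hπ : P.Invariant π)
    (hP : MonotoneKernel P) (hach : CouplingAchievable P {p | p.1 ≤ p.2})
    (hg : IsUnitMeasurable g) (hgm : Monotone g) (y : E) :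
    Tendsto (fun n ↦ transitionOp (P ^ n) g y) atTop (𝓝 (∫ x, g x ∂π)) := by
  refine tendsto_of_subseq_tendsto fun m hm ↦ ?_
  obtain ⟨φ, hφ, hstable⟩ := exists_strictMono_ae_isStableAlong hπ hg hm
  have hmφ := hm.comp hφ.tendsto_atTop
  have hdiff : Tendsto (fun j ↦ ∫ x, (transitionOp (P ^ m (φ j)) g x
      - transitionOp (P ^ m (φ j)) g y) ∂π) atTop (𝓝 (∫ _, 0 ∂π)) := by
    have hT (n : ℕ) := hg.transitionOp (P ^ n)
    refine tendsto_integral_of_dominated_convergence (fun _ ↦ 1)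
      (fun j ↦ ((hT _).measurable.sub_const _).aestronglyMeasurable) (integrable_const 1)
      (fun j ↦ .of_forall fun x ↦ ?_)
      (hstable.mono fun x hx ↦ hx.tendsto_transitionOp_sub hg hgm hmφ hP hach y)
    obtain ⟨⟨_, _⟩, _, _⟩ := And.intro ((hT (m (φ j))).mem_Icc x) ((hT (m (φ j))).mem_Icc y)
    exact abs_sub_le_iff.2 ⟨by linarith, by linarith⟩
  have hint (j : ℕ) : ∫ x, (transitionOp (P ^ m (φ j)) g x - transitionOp (P ^ m (φ j)) g y) ∂π
      = ∫ x, g x ∂π - transitionOp (P ^ m (φ j)) g y := by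
    rw [integral_sub ((hg.transitionOp _).integrable π) (integrable_const _),
      integral_transitionOp_pow hπ hg, integral_const, probReal_univ, one_smul]
  simp only [hint, integral_zero] at hdiff
  exact ⟨φ, by simpa using hdiff.const_sub (∫ x, g x ∂π)⟩

end Coupling

section NormalOrder

lemma isClosed_upperClosure_of_isCompact {α : Type*} [TopologicalSpace α] [Preorder α]
    [OrderClosedTopology α] {K : Set α} (hK : IsCompact K) :
    IsClosed (upperClosure K : Set α) := by
  have : CompactSpace K := isCompact_iff_compactSpace.1 hK
  have hclosed : IsClosed {p : K × α | (p.1 : α) ≤ p.2} :=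
    isClosed_le (continuous_subtype_val.comp continuous_fst) continuous_snd
  convert isClosedMap_snd_of_compactSpace _ hclosed
  ext y
  simp

lemma isClosed_lowerClosure_of_isCompact {α : Type*} [TopologicalSpace α] [Preorder α]
    [OrderClosedTopology α] {K : Set α} (hK : IsCompact K) :
    IsClosed (lowerClosure K : Set α) :=
  isClosed_upperClosure_of_isCompact (α := αᵒᵈ) hK

lemma NormalOrdered.exists_closedBall_upperClosure_inter_lowerClosure_subset {E : Type*}
    [PseudoMetricSpace E] [Preorder E] (hE : NormalOrdered E) {U : Set E} (hU : IsOpen U) {p : E}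
    (hp : p ∈ U) : ∃ δ > 0, (upperClosure (Metric.closedBall p δ) : Set E)
      ∩ lowerClosure (Metric.closedBall p δ) ⊆ U := by
  obtain ⟨h, hcont, h_zero, -, hdist⟩ := hE
  obtain ⟨ε, hε, hεU⟩ := Metric.isOpen_iff.1 hU p hp
  obtain ⟨η, hη, hηε⟩ := Metric.continuousWithinAt_iff.1
    (hcont 0 Set.self_mem_Ici) (ε / 2) (half_pos hε)
  refine ⟨min (η / 3) (ε / 3), by positivity, ?_⟩
  rintro y ⟨⟨x, hx, hxy⟩, z, hz, hyz⟩
  obtain ⟨hxη, hxε⟩ := le_min_iff.1 (Metric.mem_closedBall.1 hx)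
  obtain ⟨hzη, -⟩ := le_min_iff.1 (Metric.mem_closedBall.1 hz)
  have hxz : dist x z < η := by linarith [dist_triangle_right x z p]
  have hxy_lt : dist x y < ε / 2 := by
    have hh := hηε dist_nonneg (by simpa using hxz)
    rw [h_zero, Real.dist_0_eq_abs] at hh
    exact (hdist x y z hxy hyz).trans_lt (lt_of_abs_lt hh)
  exact hεU (Metric.mem_ball'.2 (by linarith [dist_triangle_left p y x]))

lemma monotone_indicator_one_of_isUpperSet {α : Type*} [Preorder α] {I : Set α}
    (hI : IsUpperSet I) : Monotone (I.indicator (1 : α → ℝ)) := by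
  intro a b hab
  by_cases ha : a ∈ I
  · simp [ha, hI hab ha]
  · rw [Set.indicator_of_notMem ha]
    exact Set.indicator_nonneg (fun _ _ ↦ zero_le_one) b

/-- The family of the sets `I ∩ J` with `I` a measurable upper set and `J` a measurable lower set,
on which convergence of probability measures is controlled by upper sets. -/
def upperInterLower (E : Type*) [MeasurableSpace E] [Preorder E] : Set (Set E) :=
  {s | ∃ I J : Set E, MeasurableSet I ∧ IsUpperSet I ∧ MeasurableSet J ∧ IsLowerSet J ∧ s = I ∩ J}

section UpperInterLower

variable {E ι : Type*} [MeasurableSpace E] [Preorder E] {l : Filter ι} {s : Set E}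

lemma measurableSet_of_mem_upperInterLower (hs : s ∈ upperInterLower E) : MeasurableSet s := by
  obtain ⟨I, J, hI, -, hJ, -, rfl⟩ := hs
  exact hI.inter hJ

lemma isPiSystem_upperInterLower : IsPiSystem (upperInterLower E) := by
  rintro _ ⟨I, J, hI, hIu, hJ, hJl, rfl⟩ _ ⟨I', J', hI', hIu', hJ', hJl', rfl⟩ -
  exact ⟨I ∩ I', J ∩ J', hI.inter hI', hIu.inter hIu', hJ.inter hJ', hJl.inter hJl',
    Set.inter_inter_inter_comm I J I' J'⟩

lemma tendsto_measureReal_of_mem_upperInterLower {μ : ι → Measure E} {ν : Measure E}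
    [∀ i, IsFiniteMeasure (μ i)] [IsFiniteMeasure ν]
    (h : ∀ I, MeasurableSet I → IsUpperSet I →
      Tendsto (fun i ↦ (μ i).real I) l (𝓝 (ν.real I))) (hs : s ∈ upperInterLower E) :
    Tendsto (fun i ↦ (μ i).real s) l (𝓝 (ν.real s)) := by
  obtain ⟨I, J, hI, hIu, hJ, hJl, rfl⟩ := hs
  have hsplit (ρ : Measure E) [IsFiniteMeasure ρ] :
      ρ.real (I ∩ J) = ρ.real I - ρ.real (I ∩ Jᶜ) := by
    rw [← measureReal_inter_add_sdiff (s := I) hJ, Set.sdiff_eq, add_sub_cancel_right]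
  simp only [hsplit]
  exact (h I hI hIu).sub (h _ (hI.inter hJ.compl) (hIu.inter hJl.compl))

end UpperInterLower

namespace NormalOrdered

variable {E : Type*} [PseudoMetricSpace E] [MeasurableSpace E] [OpensMeasurableSpace E]
  [Preorder E] [OrderClosedTopology E]

lemma exists_finset_upperInterLower (hE : NormalOrdered E) {K U : Set E}
    (hK : IsCompact K) (hU : IsOpen U) (hKU : K ⊆ U) : ∃ t : Finset (Set E),
      (∀ s ∈ t, s ∈ upperInterLower E) ∧ K ⊆ ⋃ s ∈ t, s ∧ ⋃ s ∈ t, s ⊆ U := by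
  classical
  choose! δ hδ hδU using fun p (hp : p ∈ K) ↦
    hE.exists_closedBall_upperClosure_inter_lowerClosure_subset hU (hKU hp)
  -- Intersecting with `K` makes the generating sets compact, so that their closures are closed.
  let B (p : E) : Set E := K ∩ Metric.closedBall p (δ p)
  have hB (p : E) : IsCompact (B p) := hK.inter_right Metric.isClosed_closedBall
  let D (p : E) : Set E := upperClosure (B p) ∩ lowerClosure (B p)
  have hBD (p : E) : B p ⊆ D p := Set.subset_inter subset_upperClosure subset_lowerClosure
  obtain ⟨c, hcK, hKc⟩ := hK.elim_nhds_subcover (fun p ↦ Metric.closedBall p (δ p))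
    fun p hp ↦ Metric.closedBall_mem_nhds p (hδ p hp)
  refine ⟨c.image D, ?_, ?_, ?_⟩
  · intro s hs
    obtain ⟨p, -, rfl⟩ := Finset.mem_image.1 hs
    exact ⟨_, _, (isClosed_upperClosure_of_isCompact (hB p)).measurableSet,
      (upperClosure (B p)).upper, (isClosed_lowerClosure_of_isCompact (hB p)).measurableSet,
      (lowerClosure (B p)).lower, rfl⟩
  · intro x hx
    obtain ⟨p, hp, hxp⟩ := Set.mem_iUnion₂.1 (hKc hx)
    exact Set.mem_biUnion (Finset.mem_image_of_mem D hp) (hBD p ⟨hx, hxp⟩)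
  · rw [Finset.set_biUnion_finset_image]
    refine Set.iUnion₂_subset fun p hp ↦ subset_trans ?_ (hδU p (hcK p hp))
    have hBball : B p ⊆ Metric.closedBall p (δ p) := Set.inter_subset_right
    exact Set.inter_subset_inter (upperClosure_anti hBball) (lowerClosure_mono hBball)

lemma tendsto_probabilityMeasure_of_isUpperSet [BorelSpace E] [PolishSpace E]
    (hE : NormalOrdered E) {ι : Type*} {l : Filter ι} [l.IsCountablyGenerated]
    {μ : ι → ProbabilityMeasure E} {ν : ProbabilityMeasure E}
    (h : ∀ I, MeasurableSet I → IsUpperSet I → Tendsto (fun i ↦ (μ i : Measure E).real I) l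
      (𝓝 ((ν : Measure E).real I))) :
    Tendsto μ l (𝓝 ν) := by
  rcases l.eq_or_neBot with rfl | _
  · exact tendsto_bot
  refine tendsto_of_forall_isOpen_le_liminf' fun U hU ↦ le_of_forall_lt fun r hr ↦ ?_
  obtain ⟨K, hKU, hK, hrK⟩ := hU.exists_lt_isCompact hr
  obtain ⟨t, ht, hKt, htU⟩ := hE.exists_finset_upperInterLower hK hU hKU
  have hreal := isPiSystem_upperInterLower.tendsto_measureReal_biUnion ht
    (fun s ↦ measurableSet_of_mem_upperInterLower)
    (fun s ↦ tendsto_measureReal_of_mem_upperInterLower h)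
  have hlim : Tendsto (fun i ↦ (μ i : Measure E) (⋃ s ∈ t, s)) l
      (𝓝 ((ν : Measure E) (⋃ s ∈ t, s))) :=
    (ENNReal.tendsto_toReal_iff (fun _ ↦ measure_ne_top _ _) (measure_ne_top _ _)).1 hreal
  calc r < (ν : Measure E) K := hrK
    _ ≤ (ν : Measure E) (⋃ s ∈ t, s) := measure_mono hKt
    _ = l.liminf fun i ↦ (μ i : Measure E) (⋃ s ∈ t, s) := hlim.liminf_eq.symm
    _ ≤ l.liminf fun i ↦ (μ i : Measure E) U :=
      liminf_le_liminf (.of_forall fun i ↦ measure_mono htU)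

end NormalOrdered

end NormalOrder

theorem stmt9_general {E : Type*} [MetricSpace E] [PolishSpace E] [MeasurableSpace E]
    [BorelSpace E] [Preorder E] [OrderClosedTopology E] (hnorm : NormalOrdered E)
    (P : Kernel E E) [IsMarkovKernel P] (hmono : MonotoneKernel P)
    (hach : CouplingAchievable P {p : E × E | p.1 ≤ p.2})
    (π : Measure E) [IsProbabilityMeasure π] (hstat : P.Invariant π) :
    ∀ y : E, ∀ g : BoundedContinuousFunction E ℝ,
      Tendsto (fun n ↦ ∫ z, g z ∂(kpow P n y)) atTop (𝓝 (∫ z, g z ∂π)) := by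
  intro y
  let law (n : ℕ) : ProbabilityMeasure E := ⟨(P ^ n) y, inferInstance⟩
  let πProb : ProbabilityMeasure E := ⟨π, inferInstance⟩
  have hupper (I : Set E) (hI : MeasurableSet I) (hIu : IsUpperSet I) :
      Tendsto (fun n ↦ ((P ^ n) y).real I) atTop (𝓝 (π.real I)) := by
    simpa only [transitionOp_indicator_one _ hI, integral_indicator_one hI] using
      tendsto_transitionOp_pow hstat hmono hach (isUnitMeasurable_indicator_one hI)
        (monotone_indicator_one_of_isUpperSet hIu) y
  have hlaw : Tendsto law atTop (𝓝 πProb) :=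
    hnorm.tendsto_probabilityMeasure_of_isUpperSet hupper
  simp only [kpow_eq_pow]
  exact ProbabilityMeasure.tendsto_iff_forall_integral_tendsto.1 hlaw

/-- Theorem 3.4 iii: if `E` is in addition normal, `M` is achievable for the
monotone kernel `P` and a stationary distribution `π` exists, then for every `y` the law
of `Xₙʸ` converges weakly to `π`. -/
theorem stmt9 {E : Type*} [MetricSpace E] [PolishSpace E] [MeasurableSpace E] [BorelSpace E]
    [PartialOrder E] [OrderClosedTopology E]
    (hnorm : NormalOrdered E)
    (P : Kernel E E) [IsMarkovKernel P] (hmono : MonotoneKernel P)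
    (hach : Achievable P {p : E × E | p.1 ≤ p.2})
    (π : Measure E) [IsProbabilityMeasure π] (hstat : π.bind (fun a => P a) = π) :
    ∀ y : E, ∀ g : BoundedContinuousFunction E ℝ,
      Tendsto (fun n => ∫ z, g z ∂(kpow P n y)) atTop (nhds (∫ z, g z ∂π)) :=
  stmt9_general hnorm P hmono hach.couplingAchievable π hstat
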